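/- Let Q be a primitive positive-definite quaternary integer-valued quadratic form, and let n be an odd positive integer. If n is represented by Q over ℤ_2 (i.e. there exists x ∈ ℤ_2⁴ with Q(x) = n), then the local density β_2(Q;n) exists and satisfies β_2(Q;n) ≥ 1/2. -/

import Mathlib

open scoped BigOperators

/-- Value of the quadratic form with Gram matrix `A` (symmetric, even diagonal)
over any commutative ring: `Q(x) = ∑ (aᵢᵢ/2) xᵢ² + ∑_{i<j} aᵢⱼ xᵢ xⱼ`. -/
def Qval {R : Type*} [CommRing R] (A : Matrix (Fin 4) (Fin 4) ℤ) (x : Fin 4 → R) : R :=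
  (∑ i, ((A i i / 2 : ℤ) : R) * x i ^ 2) +
    ∑ i, ∑ j ∈ Finset.Ioi i, ((A i j : ℤ) : R) * (x i * x j)

/-- `A` is the Gram matrix of an integer-valued quadratic form. -/
def IsGram (A : Matrix (Fin 4) (Fin 4) ℤ) : Prop :=
  A.IsSymm ∧ ∀ i, 2 ∣ A i i

/-- The form is primitive: the gcd of its coefficients is 1. -/
def IsPrimitiveQF (A : Matrix (Fin 4) (Fin 4) ℤ) : Prop :=
  ∀ d : ℤ, (∀ i, d ∣ A i i / 2) → (∀ i j, i ≠ j → d ∣ A i j) → IsUnit d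

/-- The form is positive definite. -/
def PosDefQF (A : Matrix (Fin 4) (Fin 4) ℤ) : Prop :=
  (A.map (Int.cast : ℤ → ℝ)).PosDef

/-- `N` is the level of the form with Gram matrix `A`: the smallest positive integer
such that `N • A⁻¹` has integer entries and even diagonal. -/
def IsLevel (A : Matrix (Fin 4) (Fin 4) ℤ) (N : ℕ) : Prop :=
  0 < N ∧
    (∃ B : Matrix (Fin 4) (Fin 4) ℤ,
      B.map (Int.cast : ℤ → ℚ) = (N : ℚ) • (A.map (Int.cast : ℤ → ℚ))⁻¹ ∧ ∀ i, 2 ∣ B i i) ∧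
    ∀ M : ℕ, 0 < M →
      (∃ B : Matrix (Fin 4) (Fin 4) ℤ,
        B.map (Int.cast : ℤ → ℚ) = (M : ℚ) • (A.map (Int.cast : ℤ → ℚ))⁻¹ ∧ ∀ i, 2 ∣ B i i) →
      N ≤ M

/-- `n` is represented by the form over `ℤ`. -/
def Represented (A : Matrix (Fin 4) (Fin 4) ℤ) (n : ℕ) : Prop :=
  ∃ x : Fin 4 → ℤ, Qval A x = (n : ℤ)

/-- `n` is locally represented: representable over `ℤ_p` for every prime `p`. -/
def LocallyRepresented (A : Matrix (Fin 4) (Fin 4) ℤ) (n : ℕ) : Prop :=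
  ∀ (p : ℕ) [Fact p.Prime], ∃ x : Fin 4 → ℤ_[p], Qval A x = (n : ℤ_[p])

/-- Number of solutions of `Q(x) ≡ n mod p^k`. -/
noncomputable def localCount (A : Matrix (Fin 4) (Fin 4) ℤ) (p n k : ℕ) : ℕ :=
  Nat.card {x : Fin 4 → ZMod (p ^ k) // Qval A x = (n : ZMod (p ^ k))}

/-- The local density `β_p(Q;n)` exists and is at least `c`. -/
def DensityBound (A : Matrix (Fin 4) (Fin 4) ℤ) (p n : ℕ) (c : ℝ) : Prop :=
  ∃ β : ℝ,
    Filter.Tendsto (fun k => (localCount A p n k : ℝ) / (p : ℝ) ^ (3 * k))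
      Filter.atTop (nhds β) ∧ c ≤ β

/-!
Let `N k` be the number of solutions of `Q = n` modulo `2 ^ k`. For `k ≥ 3`, scaling by
`1 + 2 ^ (k - 1)` multiplies an odd value by `1 + 2 ^ k` modulo `2 ^ (k + 1)`, so it exchanges the
two lifts `n` and `n + 2 ^ k` of the value `n` modulo `2 ^ k`. Hence `N (k + 1) = 8 * N k`, the
density is `N 3 / 8 ^ 3`, and it remains to find `256` solutions modulo `8`, a sixteenth of all
vectors.

If the polar form takes an odd value, at least a quarter of the vectors reduce to smooth points of
`Q = 1` modulo `2`, and by Hensel lifting the four odd residues modulo `8` are taken equally often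
at these.

If the polar form is even, `Q` is constant modulo `4` on each class modulo `2`, a set of `256`
vectors. On the class of a solution, either `Q = n` throughout, or `n` and `n + 4` are taken equally
often. In the latter case, a pigeonhole argument over the sixteen classes gives a second
class on which `n` and `n + 4` are taken equally often, and the two halves add up to `256`.
-/

open Finset QuadraticMap

theorem two_mul_card_filter_eq_of_shift {α R : Type*} [AddGroup R] [DecidableEq R] {S : Finset α}
    {F : α → R} {g : α → α} {c d : R} (hd : d ≠ 0) (hdd : d + d = 0) (hg : Set.InjOn g S)
    (hgS : ∀ x ∈ S, g x ∈ S) (hF : ∀ x ∈ S, F x = c ∨ F x = c + d)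
    (hgF : ∀ x ∈ S, F (g x) = F x + d) :
    2 * #{x ∈ S | F x = c} = #S := by
  have maps_to_compl : #{x ∈ S | F x = c} ≤ #{x ∈ S | ¬F x = c} := by
    refine card_le_card_of_injOn g (fun x hx ↦ ?_) (hg.mono (coe_subset.mpr (filter_subset _ _)))
    obtain ⟨hxS, hx⟩ := mem_filter.mp hx
    simpa [hgS x hxS, hgF x hxS, hx] using hd
  have maps_from_compl : #{x ∈ S | ¬F x = c} ≤ #{x ∈ S | F x = c} := by
    refine card_le_card_of_injOn g (fun x hx ↦ ?_) (hg.mono (coe_subset.mpr (filter_subset _ _)))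
    obtain ⟨hxS, hx⟩ := mem_filter.mp hx
    simp [hgS x hxS, hgF x hxS, (hF x hxS).resolve_left hx, add_assoc, hdd]
  have := card_filter_add_card_filter_not (s := S) (F · = c)
  lia

theorem card_filter_comp_mul_card {G H : Type*} [AddGroup G] [AddGroup H] [Fintype G] [Fintype H]
    (f : G →+ H) (hf : Function.Surjective f) (P : H → Prop) [DecidablePred P] :
    #{g | P (f g)} * Fintype.card H = #{h | P h} * Fintype.card G := by
  classical
  have card_preimage (s : Finset H) : #{g | f g ∈ s} = #s * #{g | f g = 0} := by
    rw [card_eq_sum_card_fiberwise (f := f) (t := s) (by simp [Set.MapsTo]), ← smul_eq_mul,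
      ← sum_const]
    refine sum_congr rfl fun h hh ↦ ?_
    rw [← AddMonoidHom.card_fiber_eq_of_mem_range f (hf h) (hf 0), filter_filter]
    exact congrArg card (filter_congr fun g _ ↦ and_iff_right_of_imp (· ▸ hh))
  have hP := card_preimage {h | P h}
  have hG := card_preimage univ
  simp only [mem_filter_univ, mem_univ, filter_true, card_univ] at hP hG
  rw [hP, hG]
  ring

theorem map_add_two_smul {R M : Type*} [CommRing R] [AddCommGroup M] [Module R M]
    (Q : QuadraticForm R M) (x y : M) :
    Q (x + (2 : R) • y) = Q x + 4 * Q y + 2 * polar Q x y := by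
  rw [QuadraticMap.map_add Q, QuadraticMap.map_smul, polar_smul_right]
  simp only [smul_eq_mul]
  ring

/-! ### Quadratic forms over `ℤ/8` -/

namespace ModEight

-- In `ZMod 8`, `4 * s` and `2 * s` encode `s` modulo `2` and modulo `4`; in particular
-- `4 * s = 4` says that `s` is odd.

theorem eight_eq_zero : (8 : ZMod 8) = 0 := rfl

theorem four_mul_eq_zero_or_four : ∀ s : ZMod 8, 4 * s = 0 ∨ 4 * s = 4 := by decide

theorem two_mul_eq_zero_or_four : ∀ {s : ZMod 8}, 4 * s = 0 → 2 * s = 0 ∨ 2 * s = 4 := by decide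

theorem eq_or_eq_add_four : ∀ {s t : ZMod 8}, 2 * s = 2 * t → s = t ∨ s = t + 4 := by decide

theorem two_mul_card_filter_eq_of_add_four {α : Type*} {S : Finset α} {F : α → ZMod 8} {g : α → α}
    {c : ZMod 8} (hg : Set.InjOn g S) (hgS : ∀ x ∈ S, g x ∈ S) (hF : ∀ x ∈ S, 2 * F x = 2 * c)
    (hgF : ∀ x ∈ S, F (g x) = F x + 4) : 2 * #{x ∈ S | F x = c} = #S :=
  two_mul_card_filter_eq_of_shift (by decide : (4 : ZMod 8) ≠ 0) rfl hg hgS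
    (fun x hx ↦ eq_or_eq_add_four (hF x hx)) hgF

variable {M : Type*} [AddCommGroup M] [Module (ZMod 8) M]

theorem four_smul_add_two_smul (x y : M) :
    (4 : ZMod 8) • (x + (2 : ZMod 8) • y) = (4 : ZMod 8) • x := by
  rw [smul_add, smul_smul, show (4 * 2 : ZMod 8) = 0 from rfl, zero_smul, add_zero]

theorem injective_add_two_smul_comp_four_smul (f : M → M) :
    Function.Injective fun x : M ↦ x + (2 : ZMod 8) • f ((4 : ZMod 8) • x) := by
  intro x y h
  have h4 : (4 : ZMod 8) • x = (4 : ZMod 8) • y := by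
    simpa only [four_smul_add_two_smul] using congrArg ((4 : ZMod 8) • ·) h
  simpa only [h4, add_left_inj] using h

variable {Q : QuadraticForm (ZMod 8) M}

section OddPolar

theorem exists_odd_map_odd_polar {x y : M} (hxy : 4 * polar Q x y = 4) :
    ∃ u v, 4 * Q u = 4 ∧ 4 * polar Q u v = 4 := by
  rcases four_mul_eq_zero_or_four (Q x) with hx | hx
  · rcases four_mul_eq_zero_or_four (Q y) with hy | hy
    · refine ⟨x + y, y, ?_, ?_⟩
      · rw [QuadraticMap.map_add Q]
        linear_combination hx + hy + hxy
      · rw [polar_add_left, polar_self, nsmul_eq_mul, Nat.cast_ofNat]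
        linear_combination hxy + Q y * eight_eq_zero
    · exact ⟨y, x, hy, by rw [polar_comm, hxy]⟩
  · exact ⟨x, y, hx, hxy⟩

variable [Fintype M]

/-- The vectors at which `Q` is odd and the differential `polar Q x` is nonzero modulo `2`: these
reduce to the smooth points of `Q = 1` modulo `2`, so Hensel's lemma applies at them. -/
def smoothOddVectors (Q : QuadraticForm (ZMod 8) M) : Finset M :=
  {x | 4 * Q x = 4 ∧ ∃ b, 4 * polar Q x b = 4}

theorem mem_smoothOddVectors {x : M} :
    x ∈ smoothOddVectors Q ↔ 4 * Q x = 4 ∧ ∃ b, 4 * polar Q x b = 4 :=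
  mem_filter_univ x

theorem add_two_smul_mem_smoothOddVectors {x : M} (hx : x ∈ smoothOddVectors Q) (y : M) :
    x + (2 : ZMod 8) • y ∈ smoothOddVectors Q := by
  obtain ⟨hQ, b, hb⟩ := mem_smoothOddVectors.mp hx
  refine mem_smoothOddVectors.mpr ⟨?_, b, ?_⟩
  · rw [map_add_two_smul]
    linear_combination hQ + (2 * Q y + polar Q x y) * eight_eq_zero
  · rw [polar_add_left, polar_smul_left, smul_eq_mul]
    linear_combination hb + polar Q y b * eight_eq_zero

theorem exists_forall_mem_smoothOddVectors_polar (Q : QuadraticForm (ZMod 8) M) :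
    ∃ f : M → M, ∀ x ∈ smoothOddVectors Q, 4 * polar Q x (f ((4 : ZMod 8) • x)) = 4 := by
  have (y : M) : ∃ b, (∃ b', polar Q y b' = 4) → polar Q y b = 4 := by
    by_cases h : ∃ b', polar Q y b' = 4
    · exact h.imp fun b hb _ ↦ hb
    · exact ⟨0, fun h' ↦ (h h').elim⟩
  choose f hf using this
  refine ⟨f, fun x hx ↦ ?_⟩
  simpa only [polar_smul_left, smul_eq_mul, (mem_smoothOddVectors.mp hx).2, forall_const]
    using hf ((4 : ZMod 8) • x)

-- Hensel lifting: moving `x` by twice, then four times, a vector `b` with `polar Q x b` odd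
-- shifts `Q x` by `2` modulo `4`, then by `4` modulo `8`.
theorem four_mul_card_filter_smoothOddVectors {n : ZMod 8} (hn : 4 * n = 4) :
    4 * #{x ∈ smoothOddVectors Q | Q x = n} = #(smoothOddVectors Q) := by
  obtain ⟨f, hf⟩ := exists_forall_mem_smoothOddVectors_polar Q
  have lift_four :
      2 * #{x ∈ smoothOddVectors Q | 2 * Q x = 2 * n} = #(smoothOddVectors Q) := by
    refine two_mul_card_filter_eq_of_add_four
      (injective_add_two_smul_comp_four_smul f).injOn
      (fun x hx ↦ add_two_smul_mem_smoothOddVectors hx _) (fun x hx ↦ ?_) (fun x hx ↦ ?_)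
    · linear_combination (mem_smoothOddVectors.mp hx).1 - hn
    · rw [map_add_two_smul]
      linear_combination hf x hx + Q (f ((4 : ZMod 8) • x)) * eight_eq_zero
  have lift_eight : 2 * #{x ∈ {x ∈ smoothOddVectors Q | 2 * Q x = 2 * n} | Q x = n} =
      #{x ∈ smoothOddVectors Q | 2 * Q x = 2 * n} := by
    have map_shift (x : M) (hx : x ∈ smoothOddVectors Q) :
        Q (x + (2 : ZMod 8) • (2 : ZMod 8) • f ((4 : ZMod 8) • x)) = Q x + 4 := by
      rw [map_add_two_smul, QuadraticMap.map_smul, polar_smul_right, smul_eq_mul, smul_eq_mul]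
      linear_combination hf x hx + 2 * Q (f ((4 : ZMod 8) • x)) * eight_eq_zero
    refine two_mul_card_filter_eq_of_add_four
      (injective_add_two_smul_comp_four_smul fun y ↦ (2 : ZMod 8) • f y).injOn
      (fun x hx ↦ ?_) (fun x hx ↦ (mem_filter.mp hx).2)
      (fun x hx ↦ map_shift x (mem_filter.mp hx).1)
    obtain ⟨hxS, hQx⟩ := mem_filter.mp hx
    refine mem_filter.mpr ⟨add_two_smul_mem_smoothOddVectors hxS _, ?_⟩
    rw [map_shift x hxS]
    linear_combination hQx + eight_eq_zero
  have : {x ∈ {x ∈ smoothOddVectors Q | 2 * Q x = 2 * n} | Q x = n} =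
      {x ∈ smoothOddVectors Q | Q x = n} := by
    rw [filter_filter]
    exact filter_congr fun x _ ↦ and_iff_right_of_imp fun h ↦ by rw [h]
  rw [this] at lift_eight
  lia

theorem four_mul_card_filter_polar_eq_and_odd {u v z : M} {t : ZMod 8} (ht : 2 * t = 0)
    (huv : 4 * polar Q u v = 4) (hz : 4 * polar Q z u = 0)
    (hflip : ∀ x, 4 * polar Q x u = t → 4 * Q (x + z) = 4 * Q x + 4) :
    4 * #{x | 4 * polar Q x u = t ∧ 4 * Q x = 4} = Fintype.card M := by
  have half_polar : 2 * #{x | 4 * polar Q x u = t} = Fintype.card M := by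
    refine two_mul_card_filter_eq_of_add_four
      (add_left_injective v).injOn (fun x _ ↦ mem_univ _) (fun x _ ↦ ?_) (fun x _ ↦ ?_)
    · linear_combination (polar Q x u) * eight_eq_zero - ht
    · rw [polar_add_left, polar_comm Q v u, mul_add, huv]
  have half_odd : 2 * #{x ∈ {x | 4 * polar Q x u = t} | 4 * Q x = 4} =
      #{x | 4 * polar Q x u = t} := by
    refine two_mul_card_filter_eq_of_add_four
      (add_left_injective z).injOn (fun x hx ↦ ?_) (fun x _ ↦ ?_)
      (fun x hx ↦ hflip x (mem_filter_univ x |>.mp hx))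
    · rw [mem_filter_univ] at hx ⊢
      rw [polar_add_left, mul_add, hx, hz, add_zero]
    · linear_combination (Q x - 1) * eight_eq_zero
  rw [filter_filter] at half_odd
  lia

theorem card_le_four_mul_card_smoothOddVectors {x y : M} (hxy : 4 * polar Q x y = 4) :
    Fintype.card M ≤ 4 * #(smoothOddVectors Q) := by
  obtain ⟨u, v, hu, huv⟩ := exists_odd_map_odd_polar hxy
  by_cases hrad : ∃ z, 4 * Q z = 4 ∧ ∀ b, 4 * polar Q z b = 0
  · obtain ⟨z, hz, hzb⟩ := hrad
    rw [← four_mul_card_filter_polar_eq_and_odd (t := 4) rfl huv (hzb u) fun x _ ↦ by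
      rw [QuadraticMap.map_add Q, polar_comm Q x z]
      linear_combination hz + hzb x]
    gcongr
    intro x hx
    obtain ⟨hxu, hQx⟩ := (mem_filter_univ x).mp hx
    exact mem_smoothOddVectors.mpr ⟨hQx, u, hxu⟩
  · have huu : 4 * polar Q u u = 0 := by
      rw [polar_self, nsmul_eq_mul, Nat.cast_ofNat]
      linear_combination Q u * eight_eq_zero
    rw [← four_mul_card_filter_polar_eq_and_odd (t := 0) rfl huv huu fun x hx ↦ by
      rw [QuadraticMap.map_add Q]
      linear_combination hu + hx]
    gcongr
    intro x hx
    obtain ⟨-, hQx⟩ := (mem_filter_univ x).mp hx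
    obtain ⟨b, hb⟩ : ∃ b, 4 * polar Q x b ≠ 0 := by
      by_contra! h
      exact hrad ⟨x, hQx, h⟩
    exact mem_smoothOddVectors.mpr ⟨hQx, b, (four_mul_eq_zero_or_four _).resolve_left hb⟩

theorem card_le_sixteen_mul_card_filter_of_odd_polar {n : ZMod 8} (hn : 4 * n = 4) {x y : M}
    (hxy : 4 * polar Q x y = 4) : Fintype.card M ≤ 16 * #{x | Q x = n} := by
  have hlift := four_mul_card_filter_smoothOddVectors (Q := Q) hn
  have hsmooth := card_le_four_mul_card_smoothOddVectors hxy
  have hle : #{x ∈ smoothOddVectors Q | Q x = n} ≤ #{x | Q x = n} :=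
    card_le_card (filter_subset_filter _ (subset_univ _))
  lia

end OddPolar

section EvenPolar

theorem exists_odd_map_two_mul_polar_eq_zero (hB : ∀ x y, 4 * polar Q x y = 0) {a b : M}
    (ha : 4 * Q a = 4) (hb : Q (a + (2 : ZMod 8) • b) = Q a + 4) :
    ∃ w, 4 * Q w = 4 ∧ 2 * polar Q a w = 0 := by
  rw [map_add_two_smul] at hb
  rcases two_mul_eq_zero_or_four (hB a b) with h | h
  · exact ⟨b, by linear_combination hb - h, h⟩
  · refine ⟨a + b, ?_, ?_⟩
    · rw [QuadraticMap.map_add Q]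
      linear_combination ha + hB a b + hb - h
    · rw [polar_add_right, polar_self, nsmul_eq_mul, Nat.cast_ofNat]
      linear_combination ha + h + eight_eq_zero

variable [Fintype M] [DecidableEq M]

/-- The residue class of `a` modulo `2M`. When `polar Q` is even, `Q` is constant modulo `4` on
it. -/
def residueClass (a : M) : Finset M := univ.image fun c ↦ a + (2 : ZMod 8) • c

theorem mem_residueClass {a x : M} : x ∈ residueClass a ↔ ∃ c, x = a + (2 : ZMod 8) • c := by
  simp [residueClass, eq_comm]

theorem card_residueClass (a : M) : #(residueClass a) = #(residueClass (0 : M)) := by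
  have : residueClass a = (residueClass 0).map (addLeftEmbedding a) := by
    simp [residueClass, map_eq_image, image_image, Function.comp_def]
  rw [this, card_map]

theorem disjoint_residueClass {a b : M} (h : b ∉ residueClass a) :
    Disjoint (residueClass a) (residueClass b) := by
  refine disjoint_left.mpr fun x hxa hxb ↦ h (mem_residueClass.mpr ?_)
  obtain ⟨c, hc⟩ := mem_residueClass.mp hxa
  obtain ⟨d, rfl⟩ := mem_residueClass.mp hxb
  exact ⟨c - d, by rw [smul_sub, ← add_sub_assoc, ← hc, add_sub_cancel_right]⟩

theorem notMem_residueClass_of_two_mul_polar_eq_zero (hB : ∀ x y, 4 * polar Q x y = 0) {a y : M}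
    (ha : 4 * Q a = 4) (hy : 2 * polar Q a y = 0) : y ∉ residueClass a := by
  intro h
  obtain ⟨c, rfl⟩ := mem_residueClass.mp h
  rw [polar_add_right, polar_self, polar_smul_right, nsmul_eq_mul, smul_eq_mul,
    Nat.cast_ofNat] at hy
  exact absurd (by linear_combination hy - ha - hB a c) (by decide : (4 : ZMod 8) ≠ 0)

theorem two_mul_card_filter_residueClass (hB : ∀ x y, 4 * polar Q x y = 0) {n : ZMod 8} {a b : M}
    (ha : 2 * Q a = 2 * n) (hb : Q (a + (2 : ZMod 8) • b) = Q a + 4) :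
    2 * #{x ∈ residueClass a | Q x = n} = #(residueClass a) := by
  rw [map_add_two_smul] at hb
  refine two_mul_card_filter_eq_of_add_four
    (add_left_injective ((2 : ZMod 8) • b)).injOn ?_ ?_ ?_ <;>
    (intro x hx; obtain ⟨c, rfl⟩ := mem_residueClass.mp hx)
  · exact mem_residueClass.mpr ⟨c + b, by rw [smul_add, add_assoc]⟩
  · rw [map_add_two_smul]
    linear_combination ha + hB a c + Q c * eight_eq_zero
  · rw [map_add_two_smul Q (a + (2 : ZMod 8) • c), polar_add_left, polar_smul_left, smul_eq_mul]
    linear_combination hb + hB c b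

-- The three conditions cut out a subgroup of index at most `8`.
theorem exists_notMem_residueClass_zero (hB : ∀ x y, 4 * polar Q x y = 0)
    (hM : 8 * #(residueClass (0 : M)) < Fintype.card M) (a w : M) :
    ∃ k ∉ residueClass (0 : M), 2 * polar Q a k = 0 ∧ 2 * polar Q w k = 0 ∧ 4 * Q k = 0 := by
  let values : Finset (ZMod 8) := {0, 4}
  have mem_values {s : ZMod 8} (hs : 4 * s = 0) : 2 * s ∈ values := by
    simpa [values] using two_mul_eq_zero_or_four hs
  obtain ⟨y, -, hy⟩ := exists_lt_card_fiber_of_mul_lt_card_of_maps_to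
    (s := univ) (t := values ×ˢ values ×ˢ values) (n := #(residueClass (0 : M)))
    (f := fun x : M ↦ (2 * polar Q a x, 2 * polar Q w x, 4 * Q x))
    (fun x _ ↦ by
      simp only [mem_product]
      exact ⟨mem_values (hB a x), mem_values (hB w x),
        by simpa [values] using four_mul_eq_zero_or_four (Q x)⟩)
    hM
  obtain ⟨e, he⟩ := card_pos.mp (hy.trans_le' (Nat.zero_le _))
  obtain ⟨e', he', hne⟩ := exists_mem_notMem_of_card_lt_card ((card_residueClass e).trans_lt hy)
  simp only [mem_filter_univ] at he he'
  obtain ⟨ha, hw, hQ⟩ : 2 * polar Q a e' = 2 * polar Q a e ∧ 2 * polar Q w e' = 2 * polar Q w e ∧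
      4 * Q e' = 4 * Q e := by
    simpa only [Prod.mk.injEq] using he'.trans he.symm
  refine ⟨e' - e, fun h ↦ hne ?_, ?_, ?_, ?_⟩
  · obtain ⟨c, hc⟩ := mem_residueClass.mp h
    exact mem_residueClass.mpr ⟨c, by rw [← zero_add (_ • c), ← hc, add_sub_cancel]⟩
  · rw [polar_sub_right]
    linear_combination ha
  · rw [polar_sub_right]
    linear_combination hw
  · rw [sub_eq_add_neg, QuadraticMap.map_add Q, QuadraticMap.map_neg, polar_neg_right]
    linear_combination hQ + Q e * eight_eq_zero - hB e' e

theorem exists_second_residueClass (hB : ∀ x y, 4 * polar Q x y = 0)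
    (hM : 8 * #(residueClass (0 : M)) < Fintype.card M) {a b : M} (ha : 4 * Q a = 4)
    (hb : Q (a + (2 : ZMod 8) • b) = Q a + 4) :
    ∃ a' ∉ residueClass a, 2 * Q a' = 2 * Q a ∧ ∃ b', Q (a' + (2 : ZMod 8) • b') = Q a' + 4 := by
  have notMem {y : M} : 2 * polar Q a y = 0 → y ∉ residueClass a :=
    notMem_residueClass_of_two_mul_polar_eq_zero hB ha
  obtain ⟨w, hw, haw⟩ := exists_odd_map_two_mul_polar_eq_zero hB ha hb
  rcases eq_or_eq_add_four (s := 2 * Q w) (t := 2 * Q a) (by linear_combination hw - ha)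
    with hQw | hQw
  · refine ⟨w, notMem haw, hQw, a, ?_⟩
    rw [map_add_two_smul, polar_comm Q w a]
    linear_combination ha + haw
  obtain ⟨k, hk, hak, hwk, hQk⟩ := exists_notMem_residueClass_zero hB hM a w
  rcases two_mul_eq_zero_or_four hQk with hk2 | hk2
  · refine ⟨a + k, fun h ↦ hk ?_, ?_, w, ?_⟩
    · simpa only [mem_residueClass, zero_add, add_right_inj] using h
    · rw [QuadraticMap.map_add Q]
      linear_combination hk2 + hak
    · rw [map_add_two_smul, polar_add_left, polar_comm Q k w]
      linear_combination haw + hwk + hw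
  · have hawk : 2 * polar Q a (w + k) = 0 := by
      rw [polar_add_right]
      linear_combination haw + hak
    refine ⟨w + k, notMem hawk, ?_, a, ?_⟩
    · rw [QuadraticMap.map_add Q]
      linear_combination hQw + hk2 + hwk + eight_eq_zero
    · rw [map_add_two_smul, polar_comm Q (w + k) a]
      linear_combination hawk + ha

theorem card_residueClass_le_card_filter (hB : ∀ x y, 4 * polar Q x y = 0)
    (hM : 8 * #(residueClass (0 : M)) < Fintype.card M) {n : ZMod 8} (hn : 4 * n = 4) {a b : M}
    (ha : Q a = n) (hb : Q (a + (2 : ZMod 8) • b) = Q a + 4) :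
    #(residueClass (0 : M)) ≤ #{x | Q x = n} := by
  obtain ⟨a', ha', hQa', b', hb'⟩ := exists_second_residueClass hB hM (by rw [ha, hn]) hb
  have half := two_mul_card_filter_residueClass hB (by rw [ha]) hb
  have half' := two_mul_card_filter_residueClass (n := n) hB (by rw [hQa', ha]) hb'
  have hle : #({x ∈ residueClass a | Q x = n} ∪ {x ∈ residueClass a' | Q x = n}) ≤
      #{x | Q x = n} := by
    rw [← filter_union]
    exact card_le_card (filter_subset_filter _ (subset_univ _))
  rw [card_union_of_disjoint (disjoint_filter_filter (disjoint_residueClass ha'))] at hle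
  rw [card_residueClass] at half half'
  lia

theorem card_le_sixteen_mul_card_filter_of_even_polar (hB : ∀ x y, 4 * polar Q x y = 0)
    (hM : Fintype.card M ≤ 16 * #(residueClass (0 : M))) {n : ZMod 8} (hn : 4 * n = 4) {a : M}
    (ha : Q a = n) : Fintype.card M ≤ 16 * #{x | Q x = n} := by
  have filter_le (s : Finset M) : #{x ∈ s | Q x = n} ≤ #{x | Q x = n} :=
    card_le_card (filter_subset_filter _ (subset_univ _))
  by_cases hconst : ∀ b, Q (a + (2 : ZMod 8) • b) = Q a
  · have : #{x ∈ residueClass a | Q x = n} = #(residueClass (0 : M)) := by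
      rw [filter_true_of_mem, card_residueClass]
      intro x hx
      obtain ⟨c, rfl⟩ := mem_residueClass.mp hx
      rw [hconst, ha]
    linarith [filter_le (residueClass a)]
  · push Not at hconst
    obtain ⟨b, hb⟩ := hconst
    have hb : Q (a + (2 : ZMod 8) • b) = Q a + 4 := by
      refine (eq_or_eq_add_four ?_).resolve_left hb
      rw [map_add_two_smul]
      linear_combination hB a b + Q b * eight_eq_zero
    rcases le_or_gt (Fintype.card M) (8 * #(residueClass (0 : M))) with hsmall | hlarge
    · have half := two_mul_card_filter_residueClass hB (by rw [ha]) hb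
      rw [card_residueClass] at half
      linarith [filter_le (residueClass a)]
    · linarith [card_residueClass_le_card_filter hB hlarge hn ha hb]

theorem card_le_sixteen_mul_card_filter (hM : Fintype.card M ≤ 16 * #(residueClass (0 : M)))
    {n : ZMod 8} (hn : 4 * n = 4) {a : M} (ha : Q a = n) :
    Fintype.card M ≤ 16 * #{x | Q x = n} := by
  by_cases hB : ∀ x y, 4 * polar Q x y = 0
  · exact card_le_sixteen_mul_card_filter_of_even_polar hB hM hn ha
  · push Not at hB
    obtain ⟨x, y, hxy⟩ := hB
    exact card_le_sixteen_mul_card_filter_of_odd_polar hn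
      ((four_mul_eq_zero_or_four _).resolve_left hxy)

end EvenPolar

theorem card_residueClass_zero_pi (ι : Type*) [Fintype ι] [DecidableEq ι] :
    #(residueClass (0 : ι → ZMod 8)) = 4 ^ Fintype.card ι := by
  have : residueClass (0 : ι → ZMod 8) = Fintype.piFinset fun _ ↦ residueClass (0 : ZMod 8) := by
    ext x
    simp only [mem_residueClass, Fintype.mem_piFinset, funext_iff, Pi.add_apply, Pi.smul_apply,
      Pi.zero_apply]
    exact (Classical.skolem (p := fun i c ↦ x i = 0 + (2 : ZMod 8) • c)).symm
  rw [this, Fintype.card_piFinset, prod_const, card_univ,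
    show #(residueClass (0 : ZMod 8)) = 4 by decide]

theorem eight_pow_card_le {ι : Type*} [Fintype ι] [DecidableEq ι] (hι : Fintype.card ι ≤ 4)
    {Q : QuadraticForm (ZMod 8) (ι → ZMod 8)} {n : ZMod 8} (hn : 4 * n = 4) {a : ι → ZMod 8}
    (ha : Q a = n) : 8 ^ Fintype.card ι ≤ 16 * #{x | Q x = n} := by
  have hM : 8 ^ Fintype.card ι ≤ 16 * 4 ^ Fintype.card ι := by
    rw [show 8 = 2 * 4 from rfl, mul_pow]
    exact Nat.mul_le_mul_right _ (Nat.pow_le_pow_right two_pos hι)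
  have hcard : Fintype.card (ι → ZMod 8) = 8 ^ Fintype.card ι := by
    rw [Fintype.card_fun, ZMod.card]
  rw [← hcard] at hM ⊢
  exact card_le_sixteen_mul_card_filter (by rwa [card_residueClass_zero_pi]) hn ha

end ModEight

/-! ### Reduction modulo powers of two -/

section TwoPow

variable {k : ℕ}

theorem two_pow_eq_zero_of_le {m : ℕ} (h : k ≤ m) : (2 : ZMod (2 ^ k)) ^ m = 0 :=
  pow_eq_zero_of_le h (mod_cast ZMod.natCast_self (2 ^ k))

theorem two_pow_ne_zero (k : ℕ) : (2 : ZMod (2 ^ (k + 1))) ^ k ≠ 0 := by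
  have : ¬2 ^ (k + 1) ∣ 2 ^ k := by simp [Nat.pow_dvd_pow_iff_le_right]
  exact_mod_cast mt (ZMod.natCast_eq_zero_iff _ _).mp this

/-- Reduction from modulus `2 ^ (k + 1)` to `2 ^ k`, along which solutions are lifted. -/
abbrev reduceTwoPow (k : ℕ) : ZMod (2 ^ (k + 1)) →+* ZMod (2 ^ k) :=
  ZMod.castHom (pow_dvd_pow 2 k.le_succ) _

theorem reduceTwoPow_eq_iff {y z : ZMod (2 ^ (k + 1))} :
    reduceTwoPow k y = reduceTwoPow k z ↔ y = z ∨ y = z + 2 ^ k := by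
  refine ⟨fun h ↦ ?_, ?_⟩
  · obtain ⟨w, hw⟩ := ZMod.natCast_zmod_surjective (y - z)
    have hdvd : 2 ^ k ∣ w := by
      rw [← ZMod.natCast_eq_zero_iff, ← map_natCast (reduceTwoPow k), hw, map_sub, h, sub_self]
    obtain ⟨c, rfl⟩ := hdvd
    have htop := two_pow_eq_zero_of_le (le_refl (k + 1))
    obtain ⟨d, rfl | rfl⟩ := c.even_or_odd'
    · left
      push_cast at hw
      linear_combination d * htop - hw
    · right
      push_cast at hw
      linear_combination d * htop - hw
  · rintro (rfl | rfl)
    · rfl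
    · rw [map_add, map_pow, map_ofNat, two_pow_eq_zero_of_le le_rfl, add_zero]

-- `1 + 2 ^ k` squares to `1 + 2 ^ (k + 1)`.
theorem one_add_two_pow_mul_self_mul_of_odd (hk : 2 ≤ k) {s : ZMod (2 ^ (k + 1 + 1))}
    (hs : Odd s) : (1 + 2 ^ k) * (1 + 2 ^ k) * s = s + 2 ^ (k + 1) := by
  obtain ⟨m, rfl⟩ := hs
  have hsq := two_pow_eq_zero_of_le (k := k + 1 + 1) (m := k + k) (by lia)
  have htop := two_pow_eq_zero_of_le (le_refl (k + 1 + 1))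
  linear_combination (2 * m + 1) * hsq + m * htop

theorem isUnit_one_add_two_pow (hk : k ≠ 0) (l : ℕ) : IsUnit (1 + 2 ^ k : ZMod (2 ^ l)) :=
  IsNilpotent.isUnit_one_add
    ⟨l, by rw [← pow_mul]; exact two_pow_eq_zero_of_le (Nat.le_mul_of_pos_left l (by lia))⟩

end TwoPow

section LocalCount

variable {R : Type*} [CommRing R] (A : Matrix (Fin 4) (Fin 4) ℤ)

/-- `Qval A` as a quadratic form over `R`, to make the polar form and its bilinearity available. -/
noncomputable def gramForm (R : Type*) [CommRing R] (A : Matrix (Fin 4) (Fin 4) ℤ) :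
    QuadraticForm R (Fin 4 → R) :=
  (∑ i, ((A i i / 2 : ℤ) : R) • QuadraticMap.proj i i) +
    ∑ i, ∑ j ∈ Ioi i, ((A i j : ℤ) : R) • QuadraticMap.proj i j

theorem gramForm_apply (x : Fin 4 → R) : gramForm R A x = Qval A x := by
  simp [gramForm, Qval, pow_two]

theorem Qval_smul (t : R) (x : Fin 4 → R) : Qval A (t • x) = t * t * Qval A x := by
  simp only [← gramForm_apply, QuadraticMap.map_smul, smul_eq_mul]

theorem Qval_comp_ringHom {S : Type*} [CommRing S] (f : R →+* S) (x : Fin 4 → R) :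
    Qval A (f ∘ x) = f (Qval A x) := by
  simp [Qval]

theorem localCount_eq_card_filter {p k q : ℕ} [NeZero q] (hq : p ^ k = q) (n : ℕ) :
    localCount A p n k = #{x : Fin 4 → ZMod q | Qval A x = n} := by
  subst hq
  rw [localCount, Nat.card_eq_fintype_card, Fintype.card_subtype]

theorem card_filter_reduceTwoPow_Qval (n k : ℕ) :
    #{x : Fin 4 → ZMod (2 ^ (k + 1)) | reduceTwoPow k (Qval A x) = n} =
      16 * localCount A 2 n k := by
  have hsurj : Function.Surjective ((reduceTwoPow k).toAddMonoidHom.compLeft (Fin 4)) :=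
    (ZMod.castHom_surjective (pow_dvd_pow 2 k.le_succ)).comp_left
  have hcard := card_filter_comp_mul_card _ hsurj fun y ↦ Qval A y = n
  have hpow : (2 ^ (k + 1)) ^ 4 = 16 * (2 ^ k) ^ 4 := by ring
  simp only [Fintype.card_pi_const, ZMod.card, hpow, ← localCount_eq_card_filter A rfl] at hcard
  simp only [← Qval_comp_ringHom]
  refine Nat.eq_of_mul_eq_mul_right (by positivity : 0 < (2 ^ k) ^ 4) (hcard.trans ?_)
  ring

theorem localCount_two_succ {n k : ℕ} (hn : Odd n) (hk : 3 ≤ k) :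
    localCount A 2 n (k + 1) = 8 * localCount A 2 n k := by
  obtain ⟨j, rfl⟩ : ∃ j, k = j + 1 := ⟨k - 1, by lia⟩
  let S : Finset (Fin 4 → ZMod (2 ^ (j + 1 + 1))) :=
    {x | Qval A x = n ∨ Qval A x = n + 2 ^ (j + 1)}
  have hS : #S = 16 * localCount A 2 n (j + 1) := by
    simp only [S, ← reduceTwoPow_eq_iff, map_natCast]
    exact card_filter_reduceTwoPow_Qval A n (j + 1)
  have hadd : (2 : ZMod (2 ^ (j + 1 + 1))) ^ (j + 1) + 2 ^ (j + 1) = 0 := by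
    rw [← two_mul, ← pow_succ', two_pow_eq_zero_of_le le_rfl]
  have map_scale {x : Fin 4 → ZMod (2 ^ (j + 1 + 1))} (hx : x ∈ S) :
      Qval A ((1 + 2 ^ j : ZMod (2 ^ (j + 1 + 1))) • x) = Qval A x + 2 ^ (j + 1) := by
    rw [Qval_smul]
    refine one_add_two_pow_mul_self_mul_of_odd (by lia) ?_
    rcases (mem_filter_univ x).mp hx with h | h <;> rw [h]
    · exact hn.natCast
    · exact hn.natCast.add_even (even_two.pow_of_ne_zero j.succ_ne_zero)
  have hhalf : 2 * #{x ∈ S | Qval A x = (n : ZMod (2 ^ (j + 1 + 1)))} = #S := by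
    refine two_mul_card_filter_eq_of_shift (two_pow_ne_zero (j + 1)) hadd
      (g := fun x ↦ (1 + 2 ^ j : ZMod (2 ^ (j + 1 + 1))) • x)
      (fun x _ y _ ↦ (isUnit_one_add_two_pow (by lia) _).smul_left_cancel.mp) (fun x hx ↦ ?_)
      (fun x hx ↦ (mem_filter_univ x).mp hx) (fun x ↦ map_scale)
    rw [mem_filter_univ, map_scale hx]
    rcases (mem_filter_univ x).mp hx with h | h <;> rw [h]
    · exact .inr rfl
    · exact .inl (by linear_combination hadd)
  have hfilter : #{x ∈ S | Qval A x = (n : ZMod (2 ^ (j + 1 + 1)))} =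
      localCount A 2 n (j + 1 + 1) := by
    rw [localCount_eq_card_filter A rfl, filter_filter]
    exact congrArg card (filter_congr fun x _ ↦ and_iff_right_of_imp .inl)
  lia

theorem le_localCount_two_three {n : ℕ} (hn : Odd n) (h : ∃ x : Fin 4 → ℤ_[2], Qval A x = n) :
    256 ≤ localCount A 2 n 3 := by
  obtain ⟨x, hx⟩ := h
  have eight_dvd : 8 ∣ 2 ^ 3 := by norm_num
  let f : ℤ_[2] →+* ZMod 8 := (ZMod.castHom eight_dvd (ZMod 8)).comp (PadicInt.toZModPow 3)
  have hmod : gramForm (ZMod 8) A (f ∘ x) = n := by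
    rw [gramForm_apply, Qval_comp_ringHom, hx, map_natCast]
  have hn4 : 4 * (n : ZMod 8) = 4 := by
    obtain ⟨m, hm⟩ := hn.natCast (R := ZMod 8)
    rw [hm]
    linear_combination m * ModEight.eight_eq_zero
  have hcard := ModEight.eight_pow_card_le (by simp) hn4 hmod
  have hcount : localCount A 2 n 3 = #{x : Fin 4 → ZMod 8 | gramForm (ZMod 8) A x = n} := by
    simp only [gramForm_apply]
    exact localCount_eq_card_filter A (by norm_num) n
  rw [Fintype.card_fin, ← hcount] at hcard
  lia

theorem densityBound_of_localCount_succ {p n k₀ : ℕ} {c : ℝ} (hp : p ≠ 0)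
    (hsucc : ∀ k ≥ k₀, localCount A p n (k + 1) = p ^ 3 * localCount A p n k)
    (hc : c ≤ localCount A p n k₀ / p ^ (3 * k₀)) : DensityBound A p n c := by
  refine ⟨_, tendsto_const_nhds.congr' ?_, hc⟩
  filter_upwards [Filter.eventually_ge_atTop k₀] with k hk
  induction k, hk using Nat.le_induction with
  | base => rfl
  | succ k hk ih =>
    rw [ih, hsucc k hk]
    push_cast
    field_simp
    ring

end LocalCount

theorem local_density_odd_n_two_general
    (A : Matrix (Fin 4) (Fin 4) ℤ) (n : ℕ) (_hA : IsGram A) (hoddn : Odd n)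
    (h : ∃ x : Fin 4 → ℤ_[2], Qval A x = (n : ℤ_[2])) :
    DensityBound A 2 n (1 / 2 : ℝ) := by
  refine densityBound_of_localCount_succ A two_ne_zero (k₀ := 3)
    (fun k hk ↦ localCount_two_succ A hoddn hk) ?_
  have : (256 : ℝ) ≤ localCount A 2 n 3 := mod_cast le_localCount_two_three A hoddn h
  norm_num
  linarith

/-- If `n` is odd and represented over `ℤ_2`, then `β_2(Q;n) ≥ 1/2`. -/
theorem local_density_odd_n_two
    (A : Matrix (Fin 4) (Fin 4) ℤ) (n : ℕ)
    (hA : IsGram A) (hprim : IsPrimitiveQF A) (hpd : PosDefQF A)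
    (hn : 0 < n) (hoddn : Odd n)
    (h : ∃ x : Fin 4 → ℤ_[2], Qval A x = (n : ℤ_[2])) :
    DensityBound A 2 n (1 / 2 : ℝ) :=
  local_density_odd_n_two_general A n hA hoddn h
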